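/- Let Ω ⊂ ℝⁿ (n ≥ 2) be a bounded open convex domain satisfying the exterior sphere condition with radius R > 0. Suppose F : Ω × (−∞,0) → ℝ is continuous and non-decreasing in its second argument, and there are constants A > 0, α ≥ 0, β ≥ n+1 such that 0 < F(x,t) ≤ A·d_x^{β−n−1}·|t|^{−α} for all x ∈ Ω and t < 0. Let γ₃ = β/(n+α) if β < α + n; let γ₃ be any number in (0,1) if α + n ≤ β < α + n + 1; and let γ₃ = 1 if β ≥ α + n + 1. Then every classical solution u of det D²u = F(x,u) in Ω with u = 0 on ∂Ω is γ₃-Hölder continuous on the closure of Ω (Lipschitz continuous when γ₃ = 1). -/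

import Mathlib

/-- The determinant of the Hessian matrix of `u` at `x`. -/
noncomputable def hessianDet {n : ℕ} (u : EuclideanSpace ℝ (Fin n) → ℝ)
    (x : EuclideanSpace ℝ (Fin n)) : ℝ :=
  (Matrix.of fun i j : Fin n =>
    iteratedFDeriv ℝ 2 u x ![EuclideanSpace.single i (1 : ℝ), EuclideanSpace.single j (1 : ℝ)]).det

/-- `u` is a classical solution of `det D²u = F(x,u)` in `Ω`, `u = 0` on `∂Ω`. -/
def IsClassicalSolution {n : ℕ} (Ω : Set (EuclideanSpace ℝ (Fin n)))
    (F : EuclideanSpace ℝ (Fin n) → ℝ → ℝ) (u : EuclideanSpace ℝ (Fin n) → ℝ) : Prop :=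
  ContinuousOn u (closure Ω) ∧ ConvexOn ℝ Ω u ∧ ContDiffOn ℝ 2 u Ω ∧
    (∀ x ∈ Ω, u x < 0) ∧ (∀ x ∈ frontier Ω, u x = 0) ∧
    ∀ x ∈ Ω, hessianDet u x = F x (u x)

/-- `F` is continuous on `Ω × (-∞,0)`, non-decreasing in its second argument, and satisfies
`0 < F(x,t) ≤ A d_x^{β-n-1} |t|^{-α}`. -/
def SatisfiesFCond {n : ℕ} (Ω : Set (EuclideanSpace ℝ (Fin n)))
    (F : EuclideanSpace ℝ (Fin n) → ℝ → ℝ) (A α β : ℝ) : Prop :=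
  ContinuousOn (fun p : EuclideanSpace ℝ (Fin n) × ℝ => F p.1 p.2) (Ω ×ˢ Set.Iio (0 : ℝ)) ∧
    (∀ x ∈ Ω, ∀ s t : ℝ, s ≤ t → t < 0 → F x s ≤ F x t) ∧
    ∀ x ∈ Ω, ∀ t : ℝ, t < 0 →
      0 < F x t ∧ F x t ≤ A * Metric.infDist x (frontier Ω) ^ (β - n - 1) * |t| ^ (-α)

/-- `Ω` satisfies the exterior sphere condition with radius `R`: through every boundary
point there is a closed ball of radius `R` containing `Ω`. -/
def ExteriorSphereCond {n : ℕ} (Ω : Set (EuclideanSpace ℝ (Fin n))) (R : ℝ) : Prop :=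
  ∀ x₀ ∈ frontier Ω, ∃ y₀ : EuclideanSpace ℝ (Fin n),
    Ω ⊆ Metric.closedBall y₀ R ∧ x₀ ∈ Metric.sphere y₀ R

/-!
Near a boundary point `z`, let `B_R(y₀)` be the ball containing `Ω` that touches `∂Ω` at `z`, and
compare `u` with `-w`, where `w = M (R² - |x - y₀|²)^γ`. If `u + w` had a negative minimum, it
would be attained inside `Ω`; there `D²u ≥ -D²w > 0`, hence `det D²u ≥ det (-D²w)` by monotonicity
of the determinant on positive definite matrices. But there `|u| > w` and `d_x ≤ R - |x - y₀|`, so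
`det D²u` is at most `M^(-α)` times a power of `R² - |x - y₀|²`, while `det (-D²w)` is of order
`M^n` times a power which is no smaller for admissible `γ`: for `M` large this is impossible.
Hence `-u ≤ w ≤ C |x - z|^γ`, with `C` independent of `z`. Finally, the slopes of a convex
function increase along a segment prolonged up to the boundary, so this estimate at the boundary
gives the Hölder estimate on the whole closure.
-/

open Filter Topology Metric Set
open scoped Matrix ComplexOrder

section Determinant

variable {ι 𝕜 : Type*} [Fintype ι] [DecidableEq ι] [RCLike 𝕜]

lemma det_le_det_add_vecMulVec_star {B : Matrix ι ι 𝕜} (hB : B.PosDef) (v : ι → 𝕜) :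
    B.det ≤ (B + Matrix.vecMulVec v (star v)).det := by
  have rank_one_det : (1 + Matrix.replicateRow Unit (star v) * B⁻¹ *
      Matrix.replicateCol Unit v).det = 1 + star v ⬝ᵥ (B⁻¹ *ᵥ v) := by
    rw [Matrix.det_unique, Matrix.mul_assoc]
    simp [Matrix.mul_apply, Matrix.mulVec, dotProduct]
  rw [Matrix.vecMulVec_eq Unit,
    Matrix.det_add_replicateCol_mul_replicateRow hB.det_pos.ne'.isUnit, rank_one_det]
  exact le_mul_of_one_le_right hB.det_pos.le
    (le_add_of_nonneg_right (hB.inv.posSemidef.dotProduct_mulVec_nonneg v))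

lemma det_le_det_of_posSemidef_sub {A B : Matrix ι ι 𝕜} (hB : B.PosDef)
    (hAB : (A - B).PosSemidef) : B.det ≤ A.det := by
  obtain ⟨m, v, hv⟩ := Matrix.posSemidef_iff_eq_sum_vecMulVec.1 hAB
  have partial_sum : ∀ s : Finset (Fin m),
      (B + ∑ i ∈ s, Matrix.vecMulVec (v i) (star (v i))).PosDef ∧
        B.det ≤ (B + ∑ i ∈ s, Matrix.vecMulVec (v i) (star (v i))).det := by
    intro s
    induction s using Finset.induction_on with
    | empty => simpa using hB
    | insert i s hi ih =>
      rw [Finset.sum_insert hi, add_comm (Matrix.vecMulVec _ _), ← add_assoc]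
      exact ⟨ih.1.add_posSemidef (Matrix.posSemidef_vecMulVec_self_star _),
        ih.2.trans (det_le_det_add_vecMulVec_star ih.1 (v i))⟩
  simpa [← hv] using (partial_sum Finset.univ).2

end Determinant

section RankOnePerturbation

variable {ι : Type*} [DecidableEq ι]

lemma posDef_smul_one_add_smul_vecMulVec [Finite ι] {a k : ℝ} (ha : 0 < a) (hk : 0 ≤ k)
    (z : EuclideanSpace ℝ ι) :
    (a • (1 + k • Matrix.vecMulVec z.ofLp z.ofLp)).PosDef :=
  (Matrix.PosDef.one.add_posSemidef
    ((Matrix.posSemidef_vecMulVec_self_star z.ofLp).smul hk)).smul ha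

variable [Fintype ι]

lemma det_smul_one_add_smul_vecMulVec (a k : ℝ) (z : EuclideanSpace ℝ ι) :
    (a • (1 + k • Matrix.vecMulVec z.ofLp z.ofLp)).det =
      a ^ Fintype.card ι * (1 + k * ‖z‖ ^ 2) := by
  rw [Matrix.det_smul, ← Matrix.smul_vecMulVec, Matrix.vecMulVec_eq Unit,
    Matrix.det_one_add_replicateCol_mul_replicateRow, dotProduct_smul,
    EuclideanSpace.real_norm_sq_eq]
  simp [dotProduct, pow_two]

lemma dotProduct_smul_one_add_smul_vecMulVec_mulVec (a k : ℝ) (z v : EuclideanSpace ℝ ι) :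
    v.ofLp ⬝ᵥ ((a • (1 + k • Matrix.vecMulVec z.ofLp z.ofLp)) *ᵥ v.ofLp) =
      a * (‖v‖ ^ 2 + k * inner ℝ z v ^ 2) := by
  have inner_eq : inner ℝ z v = v.ofLp ⬝ᵥ z.ofLp := by
    simp [EuclideanSpace.inner_eq_star_dotProduct]
  have norm_sq_eq : ‖v‖ ^ 2 = v.ofLp ⬝ᵥ v.ofLp := by
    rw [EuclideanSpace.real_norm_sq_eq]
    simp [dotProduct, pow_two]
  rw [Matrix.smul_mulVec, Matrix.add_mulVec, Matrix.one_mulVec, Matrix.smul_mulVec,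
    Matrix.vecMulVec_mulVec, inner_eq, norm_sq_eq]
  simp only [dotProduct_smul, dotProduct_add, smul_eq_mul, MulOpposite.smul_eq_mul_unop,
    MulOpposite.unop_op, dotProduct_comm z.ofLp]
  ring

end RankOnePerturbation

section SecondDerivativeTest

lemma deriv_deriv_nonneg_of_isLocalMin {f : ℝ → ℝ} {a : ℝ} (hf : ContinuousAt f a)
    (hmin : IsLocalMin f a) : 0 ≤ deriv (deriv f) a := by
  by_contra! hneg
  have hmax : IsLocalMax f a := isLocalMax_of_deriv_deriv_neg hneg hmin.deriv_eq_zero hf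
  have hconst : f =ᶠ[𝓝 a] fun _ => f a := by
    filter_upwards [hmin, hmax] with t hle hge using le_antisymm hge hle
  rw [hconst.deriv.deriv_eq] at hneg
  simp at hneg

variable {E : Type*} [NormedAddCommGroup E] [NormedSpace ℝ E]

lemma hasDerivAt_add_smul (x v : E) (t : ℝ) : HasDerivAt (fun t : ℝ => x + t • v) v t := by
  simpa using ((hasDerivAt_id t).smul_const v).const_add x

lemma deriv_deriv_comp_add_smul {f : E → ℝ} {x : E} (hf : ContDiffAt ℝ 2 f x) (v : E) :
    deriv (deriv fun t : ℝ => f (x + t • v)) 0 = fderiv ℝ (fderiv ℝ f) x v v := by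
  have hline : Tendsto (fun t : ℝ => x + t • v) (𝓝 0) (𝓝 x) := by
    simpa using (hasDerivAt_add_smul x v 0).continuousAt.tendsto
  have first_deriv : deriv (fun t : ℝ => f (x + t • v)) =ᶠ[𝓝 0]
      fun t => fderiv ℝ f (x + t • v) v := by
    filter_upwards [hline.eventually (hf.eventually (by simp))] with t ht
    exact ((ht.differentiableAt (by simp)).hasFDerivAt.comp_hasDerivAt t
      (hasDerivAt_add_smul x v t)).deriv
  have hdiff : DifferentiableAt ℝ (fderiv ℝ f) x :=
    (hf.fderiv_right (m := 1) (by norm_num)).differentiableAt (by simp)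
  have second_deriv : HasDerivAt (fun t : ℝ => fderiv ℝ f (x + t • v) v)
      (fderiv ℝ (fderiv ℝ f) x v v) 0 := by
    have hcomp := HasFDerivAt.comp_hasDerivAt (l := fderiv ℝ f) (f := fun t : ℝ => x + t • v) 0
      (by simpa using hdiff.hasFDerivAt) (hasDerivAt_add_smul x v 0)
    exact (hcomp.clm_apply (hasDerivAt_const 0 v)).congr_deriv (by simp)
  rw [first_deriv.deriv_eq, second_deriv.deriv]

lemma fderiv_fderiv_apply_self_nonneg_of_isLocalMin {f : E → ℝ} {x : E}
    (hf : ContDiffAt ℝ 2 f x) (hmin : IsLocalMin f x) (v : E) :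
    0 ≤ fderiv ℝ (fderiv ℝ f) x v v := by
  have hline : ContinuousAt (fun t : ℝ => x + t • v) 0 := by fun_prop
  rw [← deriv_deriv_comp_add_smul hf]
  apply deriv_deriv_nonneg_of_isLocalMin
  · exact ContinuousAt.comp (g := f) (by simpa using hf.continuousAt) hline
  · exact IsLocalMin.comp_continuous (f := f) (by simpa using hmin) hline

lemma fderiv_fderiv_fun_add {f g : E → ℝ} {x : E} (hf : ContDiffAt ℝ 2 f x)
    (hg : ContDiffAt ℝ 2 g x) :
    fderiv ℝ (fderiv ℝ fun y => f y + g y) x =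
      fderiv ℝ (fderiv ℝ f) x + fderiv ℝ (fderiv ℝ g) x := by
  have fderiv_eq : fderiv ℝ (fun y => f y + g y) =ᶠ[𝓝 x]
      fun y => fderiv ℝ f y + fderiv ℝ g y := by
    filter_upwards [hf.eventually (by simp), hg.eventually (by simp)] with y hfy hgy
    exact fderiv_fun_add (hfy.differentiableAt (by simp)) (hgy.differentiableAt (by simp))
  rw [fderiv_eq.fderiv_eq, fderiv_fun_add]
  · exact (hf.fderiv_right (m := 1) (by norm_num)).differentiableAt (by simp)
  · exact (hg.fderiv_right (m := 1) (by norm_num)).differentiableAt (by simp)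

end SecondDerivativeTest

section Hessian

variable {n : ℕ} {u : EuclideanSpace ℝ (Fin n) → ℝ} {x : EuclideanSpace ℝ (Fin n)}

/-- The Hessian matrix `D²u(x)`, with entries read off the second Fréchet derivative; its
determinant is `hessianDet u x`. -/
noncomputable def hessianMatrix (u : EuclideanSpace ℝ (Fin n) → ℝ)
    (x : EuclideanSpace ℝ (Fin n)) : Matrix (Fin n) (Fin n) ℝ :=
  Matrix.of fun i j =>
    fderiv ℝ (fderiv ℝ u) x (EuclideanSpace.single i 1) (EuclideanSpace.single j 1)

lemma det_hessianMatrix (u : EuclideanSpace ℝ (Fin n) → ℝ) (x : EuclideanSpace ℝ (Fin n)) :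
    (hessianMatrix u x).det = hessianDet u x := by
  simp [hessianMatrix, hessianDet, iteratedFDeriv_two_apply]

lemma isHermitian_hessianMatrix (hu : ContDiffAt ℝ 2 u x) : (hessianMatrix u x).IsHermitian := by
  ext i j
  simpa [hessianMatrix] using hu.isSymmSndFDerivAt (by simp) _ _

lemma dotProduct_hessianMatrix_mulVec (u : EuclideanSpace ℝ (Fin n) → ℝ)
    (x v : EuclideanSpace ℝ (Fin n)) :
    v.ofLp ⬝ᵥ (hessianMatrix u x *ᵥ v.ofLp) = fderiv ℝ (fderiv ℝ u) x v v := by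
  have hv : v = ∑ i, v i • EuclideanSpace.single i (1 : ℝ) := by
    ext j
    simp [Finset.sum_apply, Pi.single_apply]
  conv_rhs => rw [hv]
  simp only [hessianMatrix, map_sum, map_smul, sum_apply, smul_apply, Matrix.mulVec, dotProduct,
    Matrix.of_apply, smul_eq_mul, Finset.mul_sum]
  rw [Finset.sum_comm]
  exact Finset.sum_congr rfl fun i _ => Finset.sum_congr rfl fun j _ => by ring

lemma det_le_hessianDet {B : Matrix (Fin n) (Fin n) ℝ} (hB : B.PosDef)
    (hu : ContDiffAt ℝ 2 u x)
    (hle : ∀ v : EuclideanSpace ℝ (Fin n),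
      v.ofLp ⬝ᵥ (B *ᵥ v.ofLp) ≤ fderiv ℝ (fderiv ℝ u) x v v) :
    B.det ≤ hessianDet u x := by
  rw [← det_hessianMatrix]
  refine det_le_det_of_posSemidef_sub hB (Matrix.PosSemidef.of_dotProduct_mulVec_nonneg
    ((isHermitian_hessianMatrix hu).sub hB.isHermitian) fun v => ?_)
  rw [star_trivial, Matrix.sub_mulVec, dotProduct_sub, sub_nonneg]
  exact (hle (WithLp.toLp 2 v)).trans_eq
    (dotProduct_hessianMatrix_mulVec u x (WithLp.toLp 2 v)).symm

lemma pow_mul_one_add_le_hessianDet {a k : ℝ} (ha : 0 < a) (hk : 0 ≤ k)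
    (hu : ContDiffAt ℝ 2 u x) {z : EuclideanSpace ℝ (Fin n)}
    (hle : ∀ v, a * (‖v‖ ^ 2 + k * inner ℝ z v ^ 2) ≤ fderiv ℝ (fderiv ℝ u) x v v) :
    a ^ n * (1 + k * ‖z‖ ^ 2) ≤ hessianDet u x := by
  have hdet := det_le_hessianDet (posDef_smul_one_add_smul_vecMulVec ha hk z) hu fun v =>
    (dotProduct_smul_one_add_smul_vecMulVec_mulVec a k z v).trans_le (hle v)
  rwa [det_smul_one_add_smul_vecMulVec, Fintype.card_fin] at hdet

end Hessian

section BallBarrier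

variable {E : Type*} [NormedAddCommGroup E] {M γ R : ℝ} {y₀ x : E}

/-- The concave barrier `M (R² - |x - y₀|²)^γ`, which is positive inside the ball of radius `R`
around `y₀` and vanishes on its boundary. Solutions are compared with its negative. The power is
only meaningful on the closed ball. -/
noncomputable def ballBarrier (M γ R : ℝ) (y₀ x : E) : ℝ :=
  M * (R ^ 2 - ‖x - y₀‖ ^ 2) ^ γ

lemma sq_sub_norm_sub_sq_pos (hx : x ∈ ball y₀ R) : 0 < R ^ 2 - ‖x - y₀‖ ^ 2 :=
  sub_pos.2 (pow_lt_pow_left₀ (mem_ball_iff_norm.1 hx) (norm_nonneg _) two_ne_zero)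

lemma sq_sub_norm_sub_sq_nonneg (hx : x ∈ closedBall y₀ R) : 0 ≤ R ^ 2 - ‖x - y₀‖ ^ 2 :=
  sub_nonneg.2 (pow_le_pow_left₀ (norm_nonneg _) (mem_closedBall_iff_norm.1 hx) 2)

lemma ballBarrier_nonneg (hM : 0 ≤ M) (hx : x ∈ closedBall y₀ R) : 0 ≤ ballBarrier M γ R y₀ x :=
  mul_nonneg hM (Real.rpow_nonneg (sq_sub_norm_sub_sq_nonneg hx) γ)

lemma continuous_ballBarrier (hγ : 0 ≤ γ) : Continuous (ballBarrier M γ R y₀) :=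
  continuous_const.mul (Continuous.rpow_const (by fun_prop) fun _ => Or.inr hγ)

lemma ballBarrier_le_mul_norm_sub_rpow (hM : 0 ≤ M) (hγ : 0 ≤ γ) {z : E}
    (hx : x ∈ closedBall y₀ R) (hz : z ∈ sphere y₀ R) :
    ballBarrier M γ R y₀ x ≤ M * (2 * R) ^ γ * ‖x - z‖ ^ γ := by
  have hxR : ‖x - y₀‖ ≤ R := mem_closedBall_iff_norm.1 hx
  have hR : 0 ≤ R := (norm_nonneg _).trans hxR
  have htri : R ≤ ‖x - z‖ + ‖x - y₀‖ := by
    rw [← mem_sphere_iff_norm.1 hz, norm_sub_rev x z]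
    exact norm_sub_le_norm_sub_add_norm_sub z x y₀
  have hsq : R ^ 2 - ‖x - y₀‖ ^ 2 ≤ 2 * R * ‖x - z‖ :=
    calc R ^ 2 - ‖x - y₀‖ ^ 2 = (R + ‖x - y₀‖) * (R - ‖x - y₀‖) := by ring
      _ ≤ (R + R) * ‖x - z‖ := by gcongr; linarith
      _ = 2 * R * ‖x - z‖ := by ring
  rw [ballBarrier, mul_assoc, ← Real.mul_rpow (by positivity) (norm_nonneg _)]
  exact mul_le_mul_of_nonneg_left
    (Real.rpow_le_rpow (sq_sub_norm_sub_sq_nonneg hx) hsq hγ) hM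

variable [InnerProductSpace ℝ E]

lemma contDiffAt_ballBarrier (hx : x ∈ ball y₀ R) : ContDiffAt ℝ 2 (ballBarrier M γ R y₀) x :=
  contDiffAt_const.mul (ContDiffAt.rpow_const_of_ne
    (contDiffAt_const.sub ((contDiffAt_id.sub contDiffAt_const).norm_sq ℝ))
    (sq_sub_norm_sub_sq_pos hx).ne')

lemma hasFDerivAt_const_mul_sq_sub_norm_sub_sq_rpow (c p : ℝ) (hx : x ∈ ball y₀ R) :
    HasFDerivAt (fun y => c * (R ^ 2 - ‖y - y₀‖ ^ 2) ^ p)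
      (-(2 * c * p * (R ^ 2 - ‖x - y₀‖ ^ 2) ^ (p - 1)) • innerSL ℝ (x - y₀)) x := by
  have hsq : HasFDerivAt (fun y => R ^ 2 - ‖y - y₀‖ ^ 2) (-(2 • innerSL ℝ (x - y₀))) x := by
    simpa using ((hasFDerivAt_id x).sub_const y₀).norm_sq.const_sub (R ^ 2)
  refine ((hsq.rpow_const (Or.inl (sq_sub_norm_sub_sq_pos hx).ne')).const_mul c).congr_fderiv ?_
  ext v
  simp only [map_sub, smul_neg, neg_apply, smul_apply, sub_apply, coe_innerSL_apply, nsmul_eq_mul,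
    Nat.cast_ofNat, smul_eq_mul, neg_smul, neg_inj]
  ring

lemma fderiv_ballBarrier (hx : x ∈ ball y₀ R) :
    fderiv ℝ (ballBarrier M γ R y₀) x =
      (-(2 * M * γ) * (R ^ 2 - ‖x - y₀‖ ^ 2) ^ (γ - 1)) • innerSL ℝ (x - y₀) := by
  rw [neg_mul]
  exact (hasFDerivAt_const_mul_sq_sub_norm_sub_sq_rpow M γ hx).fderiv

lemma fderiv_fderiv_ballBarrier_apply_self (hx : x ∈ ball y₀ R) (v : E) :
    fderiv ℝ (fderiv ℝ (ballBarrier M γ R y₀)) x v v =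
      -(2 * M * γ * (R ^ 2 - ‖x - y₀‖ ^ 2) ^ (γ - 1) *
        (‖v‖ ^ 2 + 2 * (1 - γ) / (R ^ 2 - ‖x - y₀‖ ^ 2) * inner ℝ (x - y₀) v ^ 2)) := by
  have fderiv_eq : fderiv ℝ (ballBarrier M γ R y₀) =ᶠ[𝓝 x] fun y =>
      (-(2 * M * γ) * (R ^ 2 - ‖y - y₀‖ ^ 2) ^ (γ - 1)) • innerSL ℝ (y - y₀) := by
    filter_upwards [isOpen_ball.mem_nhds hx] with y hy using fderiv_ballBarrier hy
  have hinner : HasFDerivAt (fun y => innerSL ℝ (y - y₀)) (innerSL ℝ) x :=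
    (innerSL ℝ).hasFDerivAt.comp x ((hasFDerivAt_id x).sub_const y₀)
  have hscalar := hasFDerivAt_const_mul_sq_sub_norm_sub_sq_rpow (-(2 * M * γ)) (γ - 1) hx
  have hpos := sq_sub_norm_sub_sq_pos hx
  rw [fderiv_eq.fderiv_eq, (hscalar.fun_smul hinner).fderiv,
    Real.rpow_sub_one hpos.ne' (γ - 1)]
  have hself : innerSL ℝ v v = ‖v‖ ^ 2 := real_inner_self_eq_norm_sq v
  simp only [add_apply, smul_apply, ContinuousLinearMap.smulRight_apply, innerSL_apply_apply,
    smul_eq_mul, hself]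
  field_simp
  ring

end BallBarrier

section Frontier

lemma nonempty_inter_frontier_of_isPreconnected {X : Type*} [TopologicalSpace X] {s t : Set X}
    (ht : IsPreconnected t) (hts : (t ∩ s).Nonempty) (htsc : (t ∩ sᶜ).Nonempty) :
    (t ∩ frontier s).Nonempty := by
  by_contra hempty
  have hcover : t ⊆ interior s ∪ interior sᶜ := by
    rw [← compl_frontier_eq_union_interior]
    exact fun y hy hfrontier => hempty ⟨y, hy, hfrontier⟩
  obtain ⟨p, hpt, hps⟩ := hts
  obtain ⟨q, hqt, hqs⟩ := htsc
  obtain ⟨y, -, hint, hext⟩ := ht _ _ isOpen_interior isOpen_interior hcover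
    ⟨p, hpt, (hcover hpt).resolve_right fun h => interior_subset h hps⟩
    ⟨q, hqt, (hcover hqt).resolve_left fun h => hqs (interior_subset h)⟩
  exact interior_subset hext (interior_subset hint)

variable {E : Type*} [NormedAddCommGroup E] [NormedSpace ℝ E] {s : Set E}

lemma exists_ge_add_smul_mem_frontier (hs : Bornology.IsBounded s) {x w : E} (hw : w ≠ 0)
    {t₀ : ℝ} (hmem : x + t₀ • w ∈ closure s) : ∃ t ≥ t₀, x + t • w ∈ frontier s := by
  obtain ⟨K, hK⟩ := hs.closure.exists_norm_le
  obtain ⟨t₁, ht₁, hexit⟩ : ∃ t₁ ≥ t₀, x + t₁ • w ∉ closure s := by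
    refine ⟨max t₀ ((K + ‖x‖ + 1) / ‖w‖), le_max_left _ _, fun hin => ?_⟩
    have hlarge := (div_le_iff₀ (norm_pos_iff.2 hw)).1 (le_max_right t₀ ((K + ‖x‖ + 1) / ‖w‖))
    generalize max t₀ ((K + ‖x‖ + 1) / ‖w‖) = t at hin hlarge
    have hsmall : ‖t • w‖ ≤ K + ‖x‖ := by
      simpa using (norm_sub_le (x + t • w) x).trans (add_le_add_left (hK _ hin) _)
    rw [norm_smul, Real.norm_eq_abs] at hsmall
    nlinarith [le_abs_self t, norm_nonneg w]
  have hray : IsPreconnected ((fun t : ℝ => x + t • w) '' Ici t₀) :=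
    isPreconnected_Ici.image _ (by fun_prop)
  obtain ⟨_, ⟨t, ht, rfl⟩, hfrontier⟩ := nonempty_inter_frontier_of_isPreconnected hray
    ⟨_, mem_image_of_mem _ self_mem_Ici, hmem⟩ ⟨_, mem_image_of_mem _ ht₁, hexit⟩
  exact ⟨t, ht, frontier_closure_subset hfrontier⟩

lemma infDist_frontier_le_sub_norm_sub [Nontrivial E] {x y₀ : E} {R : ℝ}
    (hs : s ⊆ closedBall y₀ R) (hx : x ∈ closure s) :
    infDist x (frontier s) ≤ R - ‖x - y₀‖ := by
  obtain ⟨w, c, hw, hc, hxw⟩ : ∃ (w : E) (c : ℝ), w ≠ 0 ∧ 0 ≤ c ∧ x - y₀ = c • w := by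
    by_cases hxy : x - y₀ = 0
    · obtain ⟨w, hw⟩ := exists_ne (0 : E)
      exact ⟨w, 0, hw, le_rfl, by simp [hxy]⟩
    · exact ⟨x - y₀, 1, hxy, zero_le_one, by simp⟩
  obtain ⟨t, ht, hz⟩ := exists_ge_add_smul_mem_frontier (isBounded_closedBall.subset hs) hw
    (x := x) (t₀ := 0) (by simpa using hx)
  have hdist : infDist x (frontier s) ≤ t * ‖w‖ := by
    simpa [dist_eq_norm, norm_smul, abs_of_nonneg ht] using infDist_le_dist_of_mem (x := x) hz
  have hexit : (c + t) * ‖w‖ ≤ R := by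
    have hzR := mem_closedBall_iff_norm.1
      (closure_minimal hs isClosed_closedBall (frontier_subset_closure hz))
    rwa [add_sub_right_comm, hxw, ← add_smul, norm_smul, Real.norm_of_nonneg (add_nonneg hc ht)]
      at hzR
  rw [hxw, norm_smul, Real.norm_of_nonneg hc]
  linarith

lemma infDist_frontier_mul_le_sq_sub_norm_sub_sq [Nontrivial E] {x y₀ : E} {R : ℝ}
    (hs : s ⊆ closedBall y₀ R) (hx : x ∈ closure s) :
    infDist x (frontier s) * R ≤ R ^ 2 - ‖x - y₀‖ ^ 2 := by
  have hxR : ‖x - y₀‖ ≤ R := mem_closedBall_iff_norm.1 (closure_minimal hs isClosed_closedBall hx)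
  calc infDist x (frontier s) * R
      ≤ (R - ‖x - y₀‖) * (R + ‖x - y₀‖) :=
        mul_le_mul (infDist_frontier_le_sub_norm_sub hs hx) (by simp)
          ((norm_nonneg _).trans hxR) (sub_nonneg.2 hxR)
    _ = R ^ 2 - ‖x - y₀‖ ^ 2 := by ring

end Frontier

section ConvexHolder

lemma convexOn_closure {E : Type*} [AddCommGroup E] [Module ℝ E] [TopologicalSpace E]
    [IsTopologicalAddGroup E] [ContinuousConstSMul ℝ E] {s : Set E} {f : E → ℝ}
    (hf : ConvexOn ℝ s f) (hcont : ContinuousOn f (closure s)) : ConvexOn ℝ (closure s) f := by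
  refine ⟨hf.1.closure, fun x hx y hy a b ha hb hab => ?_⟩
  have hprod : closure (s ×ˢ s) = closure s ×ˢ closure s := closure_prod_eq
  have hfst : MapsTo Prod.fst (closure (s ×ˢ s)) (closure s) := hprod ▸ mapsTo_fst_prod
  have hsnd : MapsTo Prod.snd (closure (s ×ˢ s)) (closure s) := hprod ▸ mapsTo_snd_prod
  refine le_on_closure (f := fun p : E × E => f (a • p.1 + b • p.2))
    (g := fun p => a • f p.1 + b • f p.2) (fun p hp => hf.2 hp.1 hp.2 ha hb hab) ?_ ?_
    (hprod ▸ mk_mem_prod hx hy : (x, y) ∈ closure (s ×ˢ s))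
  · exact hcont.comp (by fun_prop) fun p hp => hf.1.closure (hfst hp) (hsnd hp) ha hb hab
  · exact ((hcont.comp continuousOn_fst hfst).const_smul a).add
      ((hcont.comp continuousOn_snd hsnd).const_smul b)

variable {E : Type*} [NormedAddCommGroup E] [NormedSpace ℝ E] {s : Set E} {f : E → ℝ} {C γ : ℝ}

-- Extend the segment from `x` through `y` until it leaves `s`, at `z`: the slope of `f` from `x`
-- to `y` is at most that from `x` to `z`, and `t ↦ t ^ γ / t` is decreasing.
lemma sub_le_mul_norm_sub_rpow_of_frontier (hs : Bornology.IsBounded s)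
    (hf : ConvexOn ℝ (closure s) f) (hC : 0 ≤ C) (hγ : γ ≤ 1)
    (hfrontier : ∀ x ∈ closure s, ∀ z ∈ frontier s, f z - f x ≤ C * ‖x - z‖ ^ γ)
    {x y : E} (hx : x ∈ closure s) (hy : y ∈ closure s) :
    f y - f x ≤ C * ‖x - y‖ ^ γ := by
  rcases eq_or_ne y x with rfl | hxy
  · rw [sub_self]
    positivity
  obtain ⟨t, ht, hz⟩ := exists_ge_add_smul_mem_frontier hs (sub_ne_zero.2 hxy) (x := x) (t₀ := 1)
    (by simpa using hy)
  have ht0 : 0 < t := one_pos.trans_le ht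
  have hsplit : (1 - t⁻¹) • x + t⁻¹ • (x + t • (y - x)) = y := by
    rw [smul_add, smul_smul, inv_mul_cancel₀ ht0.ne']
    module
  have hslope : f y - f x ≤ t⁻¹ * (f (x + t • (y - x)) - f x) := by
    have hle := hf.2 hx (frontier_subset_closure hz) (sub_nonneg.2 (inv_le_one_of_one_le₀ ht))
      (inv_nonneg.2 ht0.le) (sub_add_cancel 1 t⁻¹)
    rw [hsplit, smul_eq_mul, smul_eq_mul] at hle
    linarith
  have hnorm : ‖x - (x + t • (y - x))‖ = t * ‖x - y‖ := by
    rw [sub_add_cancel_left, norm_neg, norm_smul, Real.norm_of_nonneg ht0.le, norm_sub_rev]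
  have hpow : t ^ γ ≤ t := by simpa using Real.rpow_le_rpow_of_exponent_le ht hγ
  calc f y - f x ≤ t⁻¹ * (C * ‖x - (x + t • (y - x))‖ ^ γ) := hslope.trans (by
        gcongr; exact hfrontier x hx _ hz)
    _ = t⁻¹ * t ^ γ * (C * ‖x - y‖ ^ γ) := by
        rw [hnorm, Real.mul_rpow ht0.le (norm_nonneg _)]
        ring
    _ ≤ t⁻¹ * t * (C * ‖x - y‖ ^ γ) := by gcongr
    _ = C * ‖x - y‖ ^ γ := by rw [inv_mul_cancel₀ ht0.ne', one_mul]

lemma abs_sub_le_mul_norm_sub_rpow_of_frontier (hs : Bornology.IsBounded s)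
    (hf : ConvexOn ℝ (closure s) f) (hC : 0 ≤ C) (hγ : γ ≤ 1)
    (hfrontier : ∀ x ∈ closure s, ∀ z ∈ frontier s, f z - f x ≤ C * ‖x - z‖ ^ γ)
    {x y : E} (hx : x ∈ closure s) (hy : y ∈ closure s) :
    |f x - f y| ≤ C * ‖x - y‖ ^ γ := by
  refine abs_sub_le_iff.2 ⟨?_, sub_le_mul_norm_sub_rpow_of_frontier hs hf hC hγ hfrontier hx hy⟩
  rw [norm_sub_rev]
  exact sub_le_mul_norm_sub_rpow_of_frontier hs hf hC hγ hfrontier hy hx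

end ConvexHolder

section Comparison

/-- The determinant of `-D²` of `ballBarrier M γ R y₀` at a point where `R² - |x - y₀|² = ρ`: in
directions orthogonal to `x - y₀` the eigenvalues of `-D²` are `2 M γ ρ^(γ-1)`, and the last factor
accounts for the radial direction. -/
noncomputable def ballBarrierHessianDet (n : ℕ) (M γ R ρ : ℝ) : ℝ :=
  (2 * M * γ * ρ ^ (γ - 1)) ^ n * (1 + 2 * (1 - γ) / ρ * (R ^ 2 - ρ))

variable {n : ℕ} {M γ R : ℝ} {Ω : Set (EuclideanSpace ℝ (Fin n))}
  {u : EuclideanSpace ℝ (Fin n) → ℝ} {y₀ x : EuclideanSpace ℝ (Fin n)}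

lemma ballBarrierHessianDet_le_hessianDet_of_isLocalMin (hM : 0 < M) (hγ0 : 0 < γ) (hγ1 : γ ≤ 1)
    (hu : ContDiffAt ℝ 2 u x) (hx : x ∈ ball y₀ R)
    (hmin : IsLocalMin (fun y => u y + ballBarrier M γ R y₀ y) x) :
    ballBarrierHessianDet n M γ R (R ^ 2 - ‖x - y₀‖ ^ 2) ≤ hessianDet u x := by
  have hpos := sq_sub_norm_sub_sq_pos hx
  have hbarrier : ContDiffAt ℝ 2 (ballBarrier M γ R y₀) x := contDiffAt_ballBarrier hx
  rw [ballBarrierHessianDet, sub_sub_cancel]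
  refine pow_mul_one_add_le_hessianDet (by positivity)
    (div_nonneg (by linarith) hpos.le) hu fun v => ?_
  have hnonneg := fderiv_fderiv_apply_self_nonneg_of_isLocalMin (hu.add hbarrier) hmin v
  rw [fderiv_fderiv_fun_add hu hbarrier, add_apply, add_apply,
    fderiv_fderiv_ballBarrier_apply_self hx] at hnonneg
  linarith

lemma neg_ballBarrier_le_of_hessianDet_lt (hM : 0 < M) (hγ0 : 0 < γ) (hγ1 : γ ≤ 1)
    (hΩ : IsOpen Ω) (hball : Ω ⊆ ball y₀ R) (hcont : ContinuousOn u (closure Ω))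
    (hu : ContDiffOn ℝ 2 u Ω) (hfrontier : ∀ z ∈ frontier Ω, 0 ≤ u z)
    (hdet : ∀ y ∈ Ω, u y < -ballBarrier M γ R y₀ y →
      hessianDet u y < ballBarrierHessianDet n M γ R (R ^ 2 - ‖y - y₀‖ ^ 2))
    (hx : x ∈ closure Ω) : -ballBarrier M γ R y₀ x ≤ u x := by
  have hclosure : closure Ω ⊆ closedBall y₀ R :=
    closure_minimal (hball.trans ball_subset_closedBall) isClosed_closedBall
  obtain ⟨m, hm, hmin⟩ := (isBounded_ball.subset hball).isCompact_closure.exists_isMinOn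
    ⟨x, hx⟩ (hcont.add (continuous_ballBarrier hγ0.le).continuousOn)
  by_contra! hlt
  have hmlt : u m + ballBarrier M γ R y₀ m < 0 := (hmin hx).trans_lt (lt_neg_iff_add_neg.1 hlt)
  have hmΩ : m ∈ Ω := by
    by_contra hmΩ
    have := hfrontier m (hΩ.frontier_eq ▸ ⟨hm, hmΩ⟩)
    linarith [ballBarrier_nonneg (γ := γ) hM.le (hclosure hm)]
  have hΩm : Ω ∈ 𝓝 m := hΩ.mem_nhds hmΩ
  exact (hdet m hmΩ (lt_neg_iff_add_neg.2 hmlt)).not_ge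
    (ballBarrierHessianDet_le_hessianDet_of_isLocalMin hM hγ0 hγ1 (hu.contDiffAt hΩm) (hball hmΩ)
      (hmin.isLocalMin (mem_of_superset hΩm subset_closure)))

end Comparison

section Amplitude

variable {n : ℕ} {A α β γ M R : ℝ}

lemma ballBarrierHessianDet_eq_pow_mul (n : ℕ) (M γ R ρ : ℝ) :
    ballBarrierHessianDet n M γ R ρ = M ^ n * ballBarrierHessianDet n 1 γ R ρ := by
  rw [ballBarrierHessianDet, ballBarrierHessianDet, ← mul_assoc, ← mul_pow]
  ring_nf

lemma ballBarrierHessianDet_pos (hM : 0 < M) (hγ0 : 0 < γ) (hγ1 : γ ≤ 1) {ρ : ℝ} (hρ : 0 < ρ)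
    (hρR : ρ ≤ R ^ 2) : 0 < ballBarrierHessianDet n M γ R ρ :=
  mul_pos (by positivity) (add_pos_of_pos_of_nonneg one_pos
    (mul_nonneg (div_nonneg (by linarith) hρ.le) (sub_nonneg.2 hρR)))

-- The radial eigenvalue gains a factor `1 / ρ` near the sphere unless `γ = 1`.
lemma exists_mul_rpow_le_one_add_radial (hR : 0 < R) (hγ1 : γ ≤ 1) :
    ∃ κ > 0, ∀ ρ, 0 < ρ → ρ ≤ R ^ 2 →
      κ * ρ ^ (if γ < 1 then (-1 : ℝ) else 0) ≤ 1 + 2 * (1 - γ) / ρ * (R ^ 2 - ρ) := by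
  rcases hγ1.lt_or_eq with hlt | rfl
  · have hmin : 0 < min 1 (2 * (1 - γ)) := lt_min one_pos (by linarith)
    refine ⟨min 1 (2 * (1 - γ)) * R ^ 2, mul_pos hmin (by positivity), fun ρ hρ hρR => ?_⟩
    rw [if_pos hlt, Real.rpow_neg_one, ← div_eq_mul_inv, div_le_iff₀ hρ]
    calc min 1 (2 * (1 - γ)) * R ^ 2
        = min 1 (2 * (1 - γ)) * ρ + min 1 (2 * (1 - γ)) * (R ^ 2 - ρ) := by ring
      _ ≤ 1 * ρ + 2 * (1 - γ) * (R ^ 2 - ρ) := by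
          gcongr
          · exact min_le_left _ _
          · exact min_le_right _ _
      _ = (1 + 2 * (1 - γ) / ρ * (R ^ 2 - ρ)) * ρ := by field_simp
  · exact ⟨1, one_pos, fun ρ _ _ => by simp⟩

lemma exists_mul_rpow_le_ballBarrierHessianDet (n : ℕ) (hR : 0 < R) (hγ0 : 0 < γ) (hγ1 : γ ≤ 1) :
    ∃ κ > 0, ∀ ρ, 0 < ρ → ρ ≤ R ^ 2 →
      κ * ρ ^ (n * (γ - 1) + if γ < 1 then (-1 : ℝ) else 0) ≤ ballBarrierHessianDet n 1 γ R ρ := by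
  obtain ⟨κ, hκ, hradial⟩ := exists_mul_rpow_le_one_add_radial hR hγ1
  refine ⟨(2 * γ) ^ n * κ, by positivity, fun ρ hρ hρR => ?_⟩
  have hpow : (2 * 1 * γ * ρ ^ (γ - 1)) ^ n = (2 * γ) ^ n * ρ ^ (n * (γ - 1)) := by
    rw [mul_one, mul_pow, mul_comm (n : ℝ), Real.rpow_mul_natCast hρ.le]
  rw [ballBarrierHessianDet, hpow, Real.rpow_add hρ, mul_mul_mul_comm]
  exact mul_le_mul_of_nonneg_left (hradial ρ hρ hρR) (by positivity)

lemma exists_mul_rpow_mul_rpow_le_ballBarrierHessianDet (hA : 0 ≤ A) (hR : 0 < R)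
    (hβ : (n : ℝ) + 1 ≤ β) (hγ0 : 0 < γ) (hγ1 : γ ≤ 1) (hγβ : (n + α) * γ ≤ β)
    (hLip : γ = 1 → α + n + 1 ≤ β) :
    ∃ K ≥ 0, ∀ ρ d : ℝ, 0 < ρ → ρ ≤ R ^ 2 → 0 ≤ d → d * R ≤ ρ →
      A * d ^ (β - n - 1) * ρ ^ (-(α * γ)) ≤ K * ballBarrierHessianDet n 1 γ R ρ := by
  obtain ⟨κ, hκ, hlower⟩ := exists_mul_rpow_le_ballBarrierHessianDet n hR hγ0 hγ1
  set e : ℝ := n * (γ - 1) + if γ < 1 then -1 else 0 with he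
  set q := β - n - 1 - α * γ - e with hq
  have hq0 : 0 ≤ q := by
    rcases hγ1.lt_or_eq with hlt | rfl
    · rw [hq, he, if_pos hlt]
      linarith
    · rw [hq, he, if_neg (lt_irrefl 1)]
      linarith [hLip rfl]
  refine ⟨A * (R ^ (β - n - 1))⁻¹ * (R ^ 2) ^ q / κ, by positivity, fun ρ d hρ hρR hd hdR => ?_⟩
  have hdρ : d ^ (β - n - 1) ≤ ρ ^ (β - n - 1) * (R ^ (β - n - 1))⁻¹ := by
    rw [← div_eq_mul_inv, ← Real.div_rpow hρ.le hR.le]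
    exact Real.rpow_le_rpow hd ((le_div_iff₀ hR).2 hdR) (by linarith)
  have hexp : ρ ^ (β - n - 1) * ρ ^ (-(α * γ)) = ρ ^ q * ρ ^ e := by
    rw [← Real.rpow_add hρ, ← Real.rpow_add hρ, hq]
    ring_nf
  calc A * d ^ (β - n - 1) * ρ ^ (-(α * γ))
      ≤ A * (ρ ^ (β - n - 1) * (R ^ (β - n - 1))⁻¹) * ρ ^ (-(α * γ)) := by gcongr
    _ = A * (R ^ (β - n - 1))⁻¹ * (ρ ^ q * ρ ^ e) := by rw [← hexp]; ring
    _ ≤ A * (R ^ (β - n - 1))⁻¹ * ((R ^ 2) ^ q * ρ ^ e) := by gcongr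
    _ = A * (R ^ (β - n - 1))⁻¹ * (R ^ 2) ^ q / κ * (κ * ρ ^ e) := by field_simp
    _ ≤ _ := by gcongr; exact hlower ρ hρ hρR

-- Both sides are powers of the amplitude, `M ^ (-α)` and `M ^ n`, so a large `M` wins.
lemma exists_amplitude_lt_ballBarrierHessianDet (hn : n ≠ 0) (hA : 0 ≤ A) (hα : 0 ≤ α)
    (hR : 0 < R) (hβ : (n : ℝ) + 1 ≤ β) (hγ0 : 0 < γ) (hγ1 : γ ≤ 1)
    (hγβ : (n + α) * γ ≤ β) (hLip : γ = 1 → α + n + 1 ≤ β) :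
    ∃ M > 0, ∀ ρ d : ℝ, 0 < ρ → ρ ≤ R ^ 2 → 0 ≤ d → d * R ≤ ρ →
      A * d ^ (β - n - 1) * (M * ρ ^ γ) ^ (-α) < ballBarrierHessianDet n M γ R ρ := by
  obtain ⟨K, hK, hunit⟩ :=
    exists_mul_rpow_mul_rpow_le_ballBarrierHessianDet hA hR hβ hγ0 hγ1 hγβ hLip
  refine ⟨K + 1, by linarith, fun ρ d hρ hρR hd hdR => ?_⟩
  have hM : 0 < K + 1 := by linarith
  have hMK : K < (K + 1) ^ (n + α) := by
    have hone : (1 : ℝ) ≤ n + α := le_add_of_le_of_nonneg (by exact_mod_cast hn.bot_lt) hα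
    linarith [Real.self_le_rpow_of_one_le (by linarith : 1 ≤ K + 1) hone]
  have hpos := ballBarrierHessianDet_pos (n := n) one_pos hγ0 hγ1 hρ hρR
  calc A * d ^ (β - n - 1) * ((K + 1) * ρ ^ γ) ^ (-α)
      = (K + 1) ^ (-α) * (A * d ^ (β - n - 1) * ρ ^ (-(α * γ))) := by
        rw [Real.mul_rpow hM.le (by positivity), ← Real.rpow_mul hρ.le]
        ring_nf
    _ ≤ (K + 1) ^ (-α) * (K * ballBarrierHessianDet n 1 γ R ρ) :=
        mul_le_mul_of_nonneg_left (hunit ρ d hρ hρR hd hdR) (by positivity)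
    _ < (K + 1) ^ (-α) * ((K + 1) ^ (n + α) * ballBarrierHessianDet n 1 γ R ρ) := by gcongr
    _ = ballBarrierHessianDet n (K + 1) γ R ρ := by
        rw [ballBarrierHessianDet_eq_pow_mul n (K + 1), ← mul_assoc, ← Real.rpow_add hM,
          neg_add_cancel_comm_assoc, Real.rpow_natCast]

end Amplitude

section Holder

variable {n : ℕ} {A α β γ M R : ℝ} {Ω : Set (EuclideanSpace ℝ (Fin n))}
  {u : EuclideanSpace ℝ (Fin n) → ℝ}

lemma hessianDet_lt_ballBarrierHessianDet_of_lt_neg_ballBarrier (hn : n ≠ 0) (hA : 0 ≤ A)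
    (hα : 0 ≤ α) (hM : 0 < M)
    (hamplitude : ∀ ρ d : ℝ, 0 < ρ → ρ ≤ R ^ 2 → 0 ≤ d → d * R ≤ ρ →
      A * d ^ (β - n - 1) * (M * ρ ^ γ) ^ (-α) < ballBarrierHessianDet n M γ R ρ)
    {x y₀ : EuclideanSpace ℝ (Fin n)} (hsub : Ω ⊆ closedBall y₀ R) (hx : x ∈ closure Ω)
    (hball : x ∈ ball y₀ R) (hlt : u x < -ballBarrier M γ R y₀ x)
    (hdet : hessianDet u x ≤ A * infDist x (frontier Ω) ^ (β - n - 1) * |u x| ^ (-α)) :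
    hessianDet u x < ballBarrierHessianDet n M γ R (R ^ 2 - ‖x - y₀‖ ^ 2) := by
  have : NeZero n := ⟨hn⟩
  have hρ := sq_sub_norm_sub_sq_pos hball
  have hd : 0 ≤ infDist x (frontier Ω) := infDist_nonneg
  have hbarrier : M * (R ^ 2 - ‖x - y₀‖ ^ 2) ^ γ ≤ |u x| :=
    (lt_neg.1 hlt).le.trans (neg_le_abs _)
  calc hessianDet u x
      ≤ A * infDist x (frontier Ω) ^ (β - n - 1) * |u x| ^ (-α) := hdet
    _ ≤ A * infDist x (frontier Ω) ^ (β - n - 1) * (M * (R ^ 2 - ‖x - y₀‖ ^ 2) ^ γ) ^ (-α) :=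
        mul_le_mul_of_nonneg_left
          (Real.rpow_le_rpow_of_nonpos (by positivity) hbarrier (neg_nonpos.2 hα)) (by positivity)
    _ < ballBarrierHessianDet n M γ R (R ^ 2 - ‖x - y₀‖ ^ 2) :=
        hamplitude _ _ hρ (sub_le_self _ (sq_nonneg _)) hd
          (infDist_frontier_mul_le_sq_sub_norm_sub_sq hsub hx)

lemma exists_sub_le_mul_norm_sub_rpow_frontier (hn : n ≠ 0) (hA : 0 ≤ A) (hα : 0 ≤ α)
    (hR : 0 < R) (hβ : (n : ℝ) + 1 ≤ β) (hγ0 : 0 < γ) (hγ1 : γ ≤ 1)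
    (hγβ : (n + α) * γ ≤ β) (hLip : γ = 1 → α + n + 1 ≤ β)
    (hΩ : IsOpen Ω) (hext : ExteriorSphereCond Ω R)
    (hcont : ContinuousOn u (closure Ω)) (hu : ContDiffOn ℝ 2 u Ω)
    (hzero : ∀ z ∈ frontier Ω, u z = 0)
    (hdet : ∀ x ∈ Ω, u x < 0 →
      hessianDet u x ≤ A * infDist x (frontier Ω) ^ (β - n - 1) * |u x| ^ (-α)) :
    ∃ C > 0, ∀ x ∈ closure Ω, ∀ z ∈ frontier Ω, u z - u x ≤ C * ‖x - z‖ ^ γ := by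
  obtain ⟨M, hM, hamplitude⟩ :=
    exists_amplitude_lt_ballBarrierHessianDet hn hA hα hR hβ hγ0 hγ1 hγβ hLip
  refine ⟨M * (2 * R) ^ γ, by positivity, fun x hx z hz => ?_⟩
  obtain ⟨y₀, hsub, hzsphere⟩ := hext z hz
  have hball : Ω ⊆ ball y₀ R := interior_closedBall y₀ hR.ne' ▸ interior_maximal hsub hΩ
  have hclosedBall : closure Ω ⊆ closedBall y₀ R := closure_minimal hsub isClosed_closedBall
  have hbelow : -ballBarrier M γ R y₀ x ≤ u x := by
    refine neg_ballBarrier_le_of_hessianDet_lt hM hγ0 hγ1 hΩ hball hcont hu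
      (fun z hz => (hzero z hz).ge) (fun y hy hlt => ?_) hx
    have hneg : u y < 0 := hlt.trans_le (neg_nonpos.2 (ballBarrier_nonneg hM.le (hsub hy)))
    exact hessianDet_lt_ballBarrierHessianDet_of_lt_neg_ballBarrier hn hA hα hM hamplitude hsub
      (subset_closure hy) (hball hy) hlt (hdet y hy hneg)
  rw [hzero z hz, zero_sub]
  exact (neg_le.1 hbelow).trans
    (ballBarrier_le_mul_norm_sub_rpow hM.le hγ0.le (hclosedBall hx) hzsphere)

lemma exponent_bounds (hn : n ≠ 0) (hα : 0 ≤ α) (hβ : 0 < β)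
    (hγ : (β < α + n ∧ γ = β / (n + α)) ∨ (α + n ≤ β ∧ β < α + n + 1 ∧ γ ∈ Ioo (0 : ℝ) 1) ∨
      (α + n + 1 ≤ β ∧ γ = 1)) :
    0 < γ ∧ γ ≤ 1 ∧ (n + α) * γ ≤ β ∧ (γ = 1 → α + n + 1 ≤ β) := by
  have hpos : (0 : ℝ) < n + α := add_pos_of_pos_of_nonneg (by positivity) hα
  rcases hγ with ⟨hlt, rfl⟩ | ⟨hle, -, hγ0, hγ1⟩ | ⟨hle, rfl⟩
  · have hγ1 : β / (n + α) < 1 := (div_lt_one hpos).2 (by linarith)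
    exact ⟨div_pos hβ hpos, hγ1.le, (mul_div_cancel₀ β hpos.ne').le, fun h => absurd h hγ1.ne⟩
  · refine ⟨hγ0, hγ1.le, ?_, fun h => absurd h hγ1.ne⟩
    linarith [mul_le_of_le_one_right hpos.le hγ1.le]
  · exact ⟨one_pos, le_rfl, by linarith, fun _ => hle⟩

theorem global_holder_regularity_exterior_sphere_general (hn : n ≠ 0) (hA : 0 ≤ A) (hα : 0 ≤ α)
    (hR : 0 < R) (hβ : (n : ℝ) + 1 ≤ β) (hγ0 : 0 < γ) (hγ1 : γ ≤ 1)
    (hγβ : (n + α) * γ ≤ β) (hLip : γ = 1 → α + n + 1 ≤ β)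
    (hΩ : IsOpen Ω) (hbdd : Bornology.IsBounded Ω) (hext : ExteriorSphereCond Ω R)
    (hcont : ContinuousOn u (closure Ω)) (hconv : ConvexOn ℝ Ω u) (hu : ContDiffOn ℝ 2 u Ω)
    (hzero : ∀ z ∈ frontier Ω, u z = 0)
    (hdet : ∀ x ∈ Ω, u x < 0 →
      hessianDet u x ≤ A * infDist x (frontier Ω) ^ (β - n - 1) * |u x| ^ (-α)) :
    ∃ C : ℝ, 0 < C ∧
      ∀ x ∈ closure Ω, ∀ y ∈ closure Ω, |u x - u y| ≤ C * ‖x - y‖ ^ γ := by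
  obtain ⟨C, hC, hfrontier⟩ := exists_sub_le_mul_norm_sub_rpow_frontier hn hA hα hR hβ hγ0 hγ1
    hγβ hLip hΩ hext hcont hu hzero hdet
  exact ⟨C, hC, fun x hx y hy => abs_sub_le_mul_norm_sub_rpow_of_frontier hbdd
    (convexOn_closure hconv hcont) hC.le hγ1 hfrontier hx hy⟩

end Holder

/-- Theorem 1.3 (i): on a domain satisfying the exterior sphere condition with radius `R`,
every classical solution is `γ₃`-Hölder continuous on the closure of `Ω`
(Lipschitz continuous when `γ₃ = 1`). -/
theorem global_holder_regularity_exterior_sphere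
    (n : ℕ) (hn : 2 ≤ n) (A α β R γ₃ : ℝ) (hA : 0 < A) (hα : 0 ≤ α) (hR : 0 < R)
    (hβ : (n : ℝ) + 1 ≤ β)
    (hγ₃ : (β < α + n ∧ γ₃ = β / (n + α)) ∨
      (α + n ≤ β ∧ β < α + n + 1 ∧ γ₃ ∈ Set.Ioo (0 : ℝ) 1) ∨
      (α + n + 1 ≤ β ∧ γ₃ = 1))
    (Ω : Set (EuclideanSpace ℝ (Fin n))) (F : EuclideanSpace ℝ (Fin n) → ℝ → ℝ)
    (u : EuclideanSpace ℝ (Fin n) → ℝ)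
    (hΩopen : IsOpen Ω) (hΩconv : Convex ℝ Ω)
    (hΩbdd : Bornology.IsBounded Ω) (hΩne : Ω.Nonempty)
    (hΩext : ExteriorSphereCond Ω R)
    (hF : SatisfiesFCond Ω F A α β)
    (hu : IsClassicalSolution Ω F u) :
    ∃ C : ℝ, 0 < C ∧
      ∀ x ∈ closure Ω, ∀ y ∈ closure Ω, |u x - u y| ≤ C * ‖x - y‖ ^ γ₃ := by
  obtain ⟨hcont, hconv, hC2, hneg, hzero, heq⟩ := hu
  have hn0 : n ≠ 0 := by omega
  have hβ0 : 0 < β := lt_of_lt_of_le (by positivity) hβ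
  obtain ⟨hγ0, hγ1, hγβ, hLip⟩ := exponent_bounds hn0 hα hβ0 hγ₃
  exact global_holder_regularity_exterior_sphere_general hn0 hA.le hα hR hβ hγ0 hγ1 hγβ hLip
    hΩopen hΩbdd hΩext hcont hconv hC2 hzero fun x hx _ =>
      (heq x hx).trans_le (hF.2.2 x hx (u x) (hneg x hx)).2
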